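/- Let α ∈ (1,2), T > 0, L > 0, and let f : [0,T] × ℝ → ℝ be continuous with |f(t,x) − f(t,y)| ≤ L|x − y| for all t, x, y, and with f(t,0) = 0 for all t ∈ [0,T]. For t ∈ [0,T] define a₋(t) := inf{ f(τ,x)/x : τ ∈ [0,t], x ≠ 0 } and a*(t) := sup{ f(τ,x)/x : τ ∈ [0,t], x ≠ 0 }. Let y : [0,T] → ℝ be continuous with y(t) = y₀ + y₁ t + (1/Γ(α)) ∫₀ᵗ (t−s)^{α−1} f(s, y(s)) ds for all t, where y₀ ≤ 0 and y₁ ≤ 0. Suppose T* ∈ (0,T] is such that for all t ∈ [0,T*]: E_{α,α}(−L t^α) > 0, E_{α,2}(−L t^α) > 0, and (E_{α,1}(−L t^α) > 0 or y₀ = 0). Then for all t ∈ [0,T*]: y₀ E_{α,1}(a*(t) t^α) + y₁ t E_{α,2}(a*(t) t^α) ≤ y(t) ≤ y₀ E_{α,1}(a₋(t) t^α) + y₁ t E_{α,2}(a₋(t) t^α). -/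

import Mathlib

/-- The two-parameter Mittag-Leffler function `E_{α,β}(z) = ∑ₖ zᵏ / Γ(αk + β)`. -/
noncomputable def mlE (α β z : ℝ) : ℝ := ∑' k : ℕ, z ^ k / Real.Gamma (α * k + β)

/-!
For every constant `lam`, a solution of `D^α y = F` also solves the linear equation
`D^α y = lam y + (F - lam y)`, so it equals the linear solution plus the convolution of `F - lam y`
with the kernel `r ^ (α - 1) E_{α,α}(lam r ^ α)`. Rescaling time turns nonnegativity of this kernel
at `lam = -L` into nonnegativity for all `lam ≥ -L`. With `lam = -L` the formula bounds `y⁺` by a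
multiple of its integral, and Grönwall's inequality gives `y ≤ 0`; hence the slope bounds of `f`
give `F - lam y` a constant sign for `lam = a*(t)` and for `lam = a₋(t)`.
-/

open Set MeasureTheory

/-! ### Riemann–Liouville fractional integrals -/

lemma integral_triangle_swap {E : Type*} [NormedAddCommGroup E] [NormedSpace ℝ E]
    {F : ℝ → ℝ → E} {a b : ℝ} (hab : a ≤ b)
    (hF : IntegrableOn F.uncurry ({p | p.2 ≤ p.1} ∩ Ioc a b ×ˢ Ioc a b)) :
    ∫ s in a..b, ∫ r in a..s, F s r = ∫ r in a..b, ∫ s in r..b, F s r := by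
  have htriangle : MeasurableSet {p : ℝ × ℝ | p.2 ≤ p.1} :=
    measurableSet_le measurable_snd measurable_fst
  calc ∫ s in a..b, ∫ r in a..s, F s r
      = ∫ s in a..b, ∫ r in a..b, {p : ℝ × ℝ | p.2 ≤ p.1}.indicator F.uncurry (s, r) := by
        refine intervalIntegral.integral_congr fun s hs => ?_
        rw [uIcc_of_le hab] at hs
        exact (intervalIntegral.integral_indicator hs).symm
    _ = ∫ r in a..b, ∫ s in a..b, {p : ℝ × ℝ | p.2 ≤ p.1}.indicator F.uncurry (s, r) := by
        refine intervalIntegral_intervalIntegral_swap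
          (F := fun s r => {p : ℝ × ℝ | p.2 ≤ p.1}.indicator F.uncurry (s, r)) ?_
        rw [uIoc_of_le hab]
        exact (integrableOn_indicator_iff htriangle).2 hF
    _ = ∫ r in a..b, ∫ s in r..b, F s r := by
        refine intervalIntegral.integral_congr_Ioo_of_le hab fun r hr => ?_
        have hIcc : Ioc a b ∩ Ici r = Icc r b := by
          ext s; simp only [mem_inter_iff, mem_Ioc, mem_Ici, mem_Icc]; grind
        calc ∫ s in a..b, {p : ℝ × ℝ | p.2 ≤ p.1}.indicator F.uncurry (s, r)
            = ∫ s in Ioc a b, (Ici r).indicator (fun s => F s r) s :=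
              intervalIntegral.integral_of_le hab
          _ = ∫ s in r..b, F s r := by
              rw [setIntegral_indicator measurableSet_Ici, hIcc, integral_Icc_eq_integral_Ioc,
                intervalIntegral.integral_of_le hr.2.le]

lemma integral_rpow_mul_sub_rpow {a b t : ℝ} (ha : 0 < a) (hb : 0 < b) (ht : 0 < t) :
    ∫ s in (0 : ℝ)..t, (t - s) ^ (a - 1) * s ^ (b - 1)
      = Real.Gamma a * Real.Gamma b / Real.Gamma (a + b) * t ^ (a + b - 1) := by
  have hbeta := Complex.betaIntegral_scaled (b : ℂ) (a : ℂ) ht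
  rw [Complex.betaIntegral_eq_Gamma_mul_div _ _ (by simpa using hb) (by simpa using ha)] at hbeta
  have hcast : EqOn (fun s : ℝ => (((t - s) ^ (a - 1) * s ^ (b - 1) : ℝ) : ℂ))
      (fun s : ℝ => (s : ℂ) ^ ((b : ℂ) - 1) * ((t : ℂ) - s) ^ ((a : ℂ) - 1)) (uIcc 0 t) := by
    intro s hs
    rw [uIcc_of_le ht.le] at hs
    simp only
    rw [Complex.ofReal_mul, Complex.ofReal_cpow (sub_nonneg.2 hs.2), Complex.ofReal_cpow hs.1]
    push_cast
    ring
  apply Complex.ofReal_injective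
  rw [← intervalIntegral.integral_ofReal, intervalIntegral.integral_congr hcast, hbeta]
  push_cast [← Complex.Gamma_ofReal, Complex.ofReal_cpow ht.le]
  rw [add_comm (b : ℂ) a]
  ring

lemma integral_sub_rpow_mul_sub_rpow {a b r t : ℝ} (ha : 0 < a) (hb : 0 < b) (hrt : r < t) :
    ∫ s in r..t, (t - s) ^ (a - 1) * (s - r) ^ (b - 1)
      = Real.Gamma a * Real.Gamma b / Real.Gamma (a + b) * (t - r) ^ (a + b - 1) := by
  rw [← integral_rpow_mul_sub_rpow ha hb (sub_pos.2 hrt), ← sub_self r,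
    ← intervalIntegral.integral_comp_sub_right
      (fun s => (t - r - s) ^ (a - 1) * s ^ (b - 1)) r]
  simp only [sub_sub_sub_cancel_right]

/-- The Riemann–Liouville fractional integral `I^a h` of order `a`, based at `0`. -/
noncomputable def riemannLiouville (a : ℝ) (h : ℝ → ℝ) (t : ℝ) : ℝ :=
  (1 / Real.Gamma a) * ∫ s in (0 : ℝ)..t, (t - s) ^ (a - 1) * h s

section RiemannLiouville

variable {a b c t : ℝ} {h g : ℝ → ℝ}

lemma continuous_const_sub_rpow (ha : 1 ≤ a) : Continuous fun s : ℝ => (t - s) ^ (a - 1) :=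
  (continuous_const.sub continuous_id).rpow_const fun _ => Or.inr (sub_nonneg.2 ha)

lemma riemannLiouville_congr (ht : 0 ≤ t) (hhg : EqOn h g (Icc 0 t)) :
    riemannLiouville a h t = riemannLiouville a g t := by
  unfold riemannLiouville
  congr 1
  refine intervalIntegral.integral_congr fun s hs => ?_
  simp only [hhg (uIcc_of_le ht ▸ hs)]

lemma riemannLiouville_add (ha : 1 ≤ a) (ht : 0 ≤ t) (hh : ContinuousOn h (Icc 0 t))
    (hg : ContinuousOn g (Icc 0 t)) :
    riemannLiouville a (fun s => h s + g s) t
      = riemannLiouville a h t + riemannLiouville a g t := by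
  have hintegrable {w : ℝ → ℝ} (hw : ContinuousOn w (Icc 0 t)) :
      IntervalIntegrable (fun s => (t - s) ^ (a - 1) * w s) volume 0 t :=
    ((continuous_const_sub_rpow ha).continuousOn.mul hw).intervalIntegrable_of_Icc ht
  simp only [riemannLiouville, mul_add]
  rw [intervalIntegral.integral_add (hintegrable hh) (hintegrable hg), mul_add]

lemma riemannLiouville_const_mul :
    riemannLiouville a (fun s => c * h s) t = c * riemannLiouville a h t := by
  simp only [riemannLiouville, mul_left_comm _ c, intervalIntegral.integral_const_mul]

lemma riemannLiouville_rpow (ha : 0 < a) (hb : 0 ≤ b) (ht : 0 ≤ t) :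
    riemannLiouville a (fun s => s ^ b) t
      = Real.Gamma (b + 1) / Real.Gamma (a + b + 1) * t ^ (a + b) := by
  rcases ht.eq_or_lt with rfl | ht
  · simp [riemannLiouville, Real.zero_rpow (by positivity : a + b ≠ 0)]
  have hbeta := integral_rpow_mul_sub_rpow ha (by positivity : 0 < b + 1) ht
  simp only [add_sub_cancel_right, ← add_assoc] at hbeta
  have hΓ : Real.Gamma a ≠ 0 := (Real.Gamma_pos_of_pos ha).ne'
  rw [riemannLiouville, hbeta]
  field_simp

lemma riemannLiouville_riemannLiouville (ha : 1 ≤ a) (hb : 1 ≤ b) (ht : 0 ≤ t)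
    (hh : ContinuousOn h (Icc 0 t)) :
    riemannLiouville a (riemannLiouville b h) t = riemannLiouville (a + b) h t := by
  have hΓa : Real.Gamma a ≠ 0 := (Real.Gamma_pos_of_pos (by linarith)).ne'
  have hΓb : Real.Gamma b ≠ 0 := (Real.Gamma_pos_of_pos (by linarith)).ne'
  have hcont : ContinuousOn
      (Function.uncurry fun s r => (t - s) ^ (a - 1) * ((s - r) ^ (b - 1) * h r))
      (Icc 0 t ×ˢ Icc 0 t) :=
    ((continuous_const_sub_rpow ha).comp continuous_fst).continuousOn.mul
      (((continuous_fst.sub continuous_snd).rpow_const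
        fun _ => Or.inr (sub_nonneg.2 hb)).continuousOn.mul
        (hh.comp continuousOn_snd fun _ hp => hp.2))
  have hintegrable : IntegrableOn
      (Function.uncurry fun s r => (t - s) ^ (a - 1) * ((s - r) ^ (b - 1) * h r))
      ({p | p.2 ≤ p.1} ∩ Ioc 0 t ×ˢ Ioc 0 t) :=
    (hcont.integrableOn_compact (isCompact_Icc.prod isCompact_Icc)).mono_set
      (inter_subset_right.trans (prod_mono Ioc_subset_Icc_self Ioc_subset_Icc_self))
  have hbeta : ∀ r ∈ Ioo 0 t, ∫ s in r..t, (t - s) ^ (a - 1) * ((s - r) ^ (b - 1) * h r)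
      = Real.Gamma a * Real.Gamma b / Real.Gamma (a + b) * ((t - r) ^ (a + b - 1) * h r) := by
    intro r hr
    simp only [← mul_assoc]
    rw [intervalIntegral.integral_mul_const,
      integral_sub_rpow_mul_sub_rpow (by linarith) (by linarith) hr.2]
  calc riemannLiouville a (riemannLiouville b h) t
      = 1 / Real.Gamma a * (1 / Real.Gamma b *
          ∫ s in (0 : ℝ)..t, ∫ r in (0 : ℝ)..s, (t - s) ^ (a - 1) * ((s - r) ^ (b - 1) * h r)) := by
        simp only [riemannLiouville, intervalIntegral.integral_const_mul,
          mul_left_comm _ (1 / Real.Gamma b)]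
    _ = 1 / Real.Gamma a * (1 / Real.Gamma b * (Real.Gamma a * Real.Gamma b / Real.Gamma (a + b) *
          ∫ r in (0 : ℝ)..t, (t - r) ^ (a + b - 1) * h r)) := by
        rw [integral_triangle_swap ht hintegrable,
          intervalIntegral.integral_congr_Ioo_of_le ht hbeta, intervalIntegral.integral_const_mul]
    _ = riemannLiouville (a + b) h t := by
        rw [riemannLiouville]
        field_simp

end RiemannLiouville

/-! ### Mittag-Leffler functions -/

section MittagLeffler

variable {α β lam : ℝ}

lemma Gamma_mul_natCast_add_pos (hα : 0 ≤ α) (hβ : 0 < β) (k : ℕ) :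
    0 < Real.Gamma (α * k + β) :=
  Real.Gamma_pos_of_pos (by positivity)

lemma factorial_le_Gamma_mul_natCast_add (hα : 1 ≤ α) (hβ : 1 ≤ β) {k : ℕ} (hk : 1 ≤ k) :
    (k.factorial : ℝ) ≤ Real.Gamma (α * k + β) := by
  have hk' : (1 : ℝ) ≤ k := by exact_mod_cast hk
  have hle : (k : ℝ) + 1 ≤ α * k + β := by nlinarith
  rw [← Real.Gamma_nat_eq_factorial]
  exact Real.Gamma_strictMonoOn_Ici.monotoneOn (by simp; linarith) (by simp; linarith) hle

lemma summable_mlE (hα : 1 ≤ α) (hβ : 1 ≤ β) (z : ℝ) :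
    Summable fun k : ℕ => z ^ k / Real.Gamma (α * k + β) := by
  rw [← summable_nat_add_iff 1]
  refine Summable.of_norm_bounded
    ((summable_nat_add_iff 1).2 (Real.summable_pow_div_factorial |z|)) fun k => ?_
  have hΓ := factorial_le_Gamma_mul_natCast_add hα hβ (Nat.succ_pos k)
  rw [norm_div, norm_pow, Real.norm_eq_abs, Real.norm_eq_abs,
    abs_of_pos (Gamma_mul_natCast_add_pos (by positivity) (by positivity) _)]
  gcongr

lemma hasSum_mlE (hα : 1 ≤ α) (hβ : 1 ≤ β) (z : ℝ) :
    HasSum (fun k : ℕ => z ^ k / Real.Gamma (α * k + β)) (mlE α β z) :=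
  (summable_mlE hα hβ z).hasSum

lemma continuous_mlE (hα : 1 ≤ α) (hβ : 1 ≤ β) : Continuous (mlE α β) := by
  rw [continuous_iff_continuousAt]
  intro z
  have hball : ContinuousOn (mlE α β) (Metric.closedBall 0 (|z| + 1)) := by
    refine continuousOn_tsum (fun k => by fun_prop) (summable_mlE hα hβ (|z| + 1)) fun k x hx => ?_
    have hx' : |x| ≤ |z| + 1 := by simpa using hx
    have hΓ : 0 < Real.Gamma (α * k + β) :=
      Gamma_mul_natCast_add_pos (by positivity) (by positivity) k
    rw [norm_div, norm_pow, Real.norm_eq_abs, Real.norm_eq_abs, abs_of_pos hΓ]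
    gcongr
  exact hball.continuousAt (Metric.closedBall_mem_nhds_of_mem (by simp))

lemma mlE_nonneg (hα : 0 ≤ α) (hβ : 0 < β) {z : ℝ} (hz : 0 ≤ z) : 0 ≤ mlE α β z :=
  tsum_nonneg fun k => div_nonneg (pow_nonneg hz k) (Gamma_mul_natCast_add_pos hα hβ k).le

lemma mlE_mul_rpow_nonneg_of_neg_le {L T : ℝ} (hα : 0 < α) (hβ : 0 < β)
    (hL : ∀ t ∈ Icc 0 T, 0 ≤ mlE α β (-L * t ^ α)) (hlam : -L ≤ lam) :
    ∀ t ∈ Icc 0 T, 0 ≤ mlE α β (lam * t ^ α) := by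
  intro t ht
  rcases le_or_gt 0 lam with hlam0 | hlam0
  · exact mlE_nonneg hα.le hβ (mul_nonneg hlam0 (Real.rpow_nonneg ht.1 _))
  have hL0 : 0 < L := by linarith
  have hratio0 : 0 ≤ -lam / L := div_nonneg (by linarith) hL0.le
  have hratio1 : -lam / L ≤ 1 := (div_le_one hL0).2 (by linarith)
  -- At the rescaled time `c * t` the argument `-L * (c * t) ^ α` is `lam * t ^ α`.
  set c := (-lam / L) ^ α⁻¹
  have hc0 : 0 ≤ c := Real.rpow_nonneg hratio0 _
  have hc1 : c ≤ 1 := Real.rpow_le_one hratio0 hratio1 (by positivity)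
  have hscale : -L * (c * t) ^ α = lam * t ^ α := by
    rw [Real.mul_rpow hc0 ht.1, Real.rpow_inv_rpow hratio0 (by positivity)]
    field_simp
  rw [← hscale]
  exact hL _ ⟨mul_nonneg hc0 ht.1, (mul_le_of_le_one_left ht.1 hc1).trans ht.2⟩

/-- The kernel `r ^ (α - 1) E_{α,α}(lam r ^ α)` of the variation of constants formula for
`D^α y = lam y + g`. -/
noncomputable def mlKernel (α lam r : ℝ) : ℝ := r ^ (α - 1) * mlE α α (lam * r ^ α)

lemma continuous_mlKernel (hα : 1 ≤ α) : Continuous (mlKernel α lam) :=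
  (Real.continuous_rpow_const (sub_nonneg.2 hα)).mul
    ((continuous_mlE hα hα).comp
      (continuous_const.mul (Real.continuous_rpow_const (zero_le_one.trans hα))))

lemma hasSum_mlKernel (hα : 1 ≤ α) {r : ℝ} (hr : 0 ≤ r) :
    HasSum (fun k : ℕ => lam ^ k / Real.Gamma (α * k + α) * r ^ (α * k + α - 1))
      (mlKernel α lam r) := by
  refine ((hasSum_mlE hα hα (lam * r ^ α)).mul_left (r ^ (α - 1))).congr_fun fun k => ?_
  rw [add_sub_assoc, Real.rpow_add_of_nonneg hr (by positivity) (sub_nonneg.2 hα),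
    Real.rpow_mul hr, Real.rpow_natCast, mul_pow]
  ring

lemma hasSum_pow_mul_riemannLiouville {t : ℝ} {h : ℝ → ℝ} (hα : 1 ≤ α) (ht : 0 ≤ t)
    (hh : ContinuousOn h (Icc 0 t)) :
    HasSum (fun k : ℕ => lam ^ k * riemannLiouville (α * k + α) h t)
      (∫ s in (0 : ℝ)..t, mlKernel α lam (t - s) * h s) := by
  obtain ⟨M, hM⟩ := isCompact_Icc.exists_bound_of_continuousOn hh
  have hexp (k : ℕ) : 1 ≤ α * k + α := le_add_of_nonneg_of_le (by positivity) hα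
  have hterm (k : ℕ) : lam ^ k * riemannLiouville (α * k + α) h t = ∫ s in (0 : ℝ)..t,
      lam ^ k / Real.Gamma (α * k + α) * (t - s) ^ (α * k + α - 1) * h s := by
    simp only [riemannLiouville, mul_assoc, intervalIntegral.integral_const_mul]
    ring
  simp only [hterm]
  refine intervalIntegral.hasSum_integral_of_dominated_convergence
    (fun k _ => |lam| ^ k / Real.Gamma (α * k + α) * t ^ (α * k + α - 1) * M)
    (fun k => ?_) (fun k => .of_forall fun s hs => ?_)
    (.of_forall fun _ _ => (hasSum_mlKernel hα ht).summable.mul_right M)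
    intervalIntegrable_const (.of_forall fun s hs => ?_)
  · rw [uIoc_of_le ht]
    exact ((continuousOn_const.mul (continuous_const_sub_rpow (hexp k)).continuousOn).mul
      (hh.mono Ioc_subset_Icc_self)).aestronglyMeasurable measurableSet_Ioc
  · rw [uIoc_of_le ht] at hs
    have hts : 0 ≤ t - s := sub_nonneg.2 hs.2
    have hΓ : 0 < Real.Gamma (α * k + α) :=
      Gamma_mul_natCast_add_pos (by positivity) (by positivity) k
    rw [norm_mul, norm_mul, norm_div, norm_pow, Real.norm_eq_abs, Real.norm_eq_abs,
      Real.norm_eq_abs, abs_of_pos hΓ, abs_of_nonneg (Real.rpow_nonneg hts _)]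
    gcongr
    · linarith [hexp k]
    · linarith [hs.1]
    · exact hM s (Ioc_subset_Icc_self hs)
  · rw [uIoc_of_le ht] at hs
    exact (hasSum_mlKernel hα (sub_nonneg.2 hs.2)).mul_right (h s)

end MittagLeffler

/-! ### Linear comparison for Caputo initial value problems -/

/-- The solution `y₀ E_{α,1}(lam t ^ α) + y₁ t E_{α,2}(lam t ^ α)` of the linear problem
`D^α y = lam y`, `y(0) = y₀`, `y'(0) = y₁`. -/
noncomputable def linearCaputoSolution (α y₀ y₁ lam t : ℝ) : ℝ :=
  y₀ * mlE α 1 (lam * t ^ α) + y₁ * (t * mlE α 2 (lam * t ^ α))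

lemma linearCaputoSolution_nonpos {α y₀ y₁ lam t : ℝ} (ht : 0 ≤ t) (hy₀ : y₀ ≤ 0) (hy₁ : y₁ ≤ 0)
    (h₁ : 0 ≤ mlE α 1 (lam * t ^ α) ∨ y₀ = 0) (h₂ : 0 ≤ mlE α 2 (lam * t ^ α)) :
    linearCaputoSolution α y₀ y₁ lam t ≤ 0 := by
  have hterm₀ : y₀ * mlE α 1 (lam * t ^ α) ≤ 0 := by
    rcases h₁ with h₁ | rfl
    · exact mul_nonpos_of_nonpos_of_nonneg hy₀ h₁
    · exact (zero_mul _).le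
  exact add_nonpos hterm₀ (mul_nonpos_of_nonpos_of_nonneg hy₁ (mul_nonneg ht h₂))

/-- `y` solves the Caputo problem `D^α y = F`, `y(0) = y₀`, `y'(0) = y₁` on `[0, T]`, encoded by
the equivalent Volterra equation. A nonlinear problem is the case `F s = f s (y s)`. -/
structure IsCaputoSolution (α y₀ y₁ T : ℝ) (F y : ℝ → ℝ) : Prop where
  continuousOn : ContinuousOn y (Icc 0 T)
  continuousOn_source : ContinuousOn F (Icc 0 T)
  eq_add_riemannLiouville : ∀ t ∈ Icc 0 T, y t = y₀ + y₁ * t + riemannLiouville α F t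

lemma eq_zero_of_le_mul_integral {u : ℝ → ℝ} {a b C : ℝ} (hu : ContinuousOn u (Icc a b))
    (hu0 : ∀ t ∈ Icc a b, 0 ≤ u t) (h : ∀ t ∈ Icc a b, u t ≤ C * ∫ s in a..t, u s) :
    ∀ t ∈ Icc a b, u t = 0 := by
  have hintegrable : ∀ t ∈ Icc a b, IntervalIntegrable u volume a t := fun t ht =>
    (hu.mono (Icc_subset_Icc_right ht.2)).intervalIntegrable_of_Icc ht.1
  have hderiv : ∀ t ∈ Icc a b,
      HasDerivWithinAt (fun x => ∫ s in a..x, u s) (u t) (Icc a b) t := fun t ht =>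
    haveI : Fact (t ∈ Icc a b) := ⟨ht⟩
    intervalIntegral.integral_hasDerivWithinAt_right (hintegrable t ht)
      (hu.stronglyMeasurableAtFilter_nhdsWithin measurableSet_Icc t) (hu t ht)
  have hintegral : ∀ t ∈ Icc a b, ∫ s in a..t, u s = 0 := by
    refine eq_zero_of_abs_deriv_le_mul_abs_self_of_eq_zero_right (K := C)
      (fun t ht => (hderiv t ht).continuousWithinAt)
      (fun t ht => (hderiv t (Ico_subset_Icc_self ht)).mono_of_mem_nhdsWithin
        (Icc_mem_nhdsGE_of_mem ht)) intervalIntegral.integral_same fun t ht => ?_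
    have ht' := Ico_subset_Icc_self ht
    have hnonneg : 0 ≤ ∫ s in a..t, u s := intervalIntegral.integral_nonneg ht.1
      fun s hs => hu0 s ⟨hs.1, hs.2.trans ht'.2⟩
    rw [Real.norm_of_nonneg (hu0 t ht'), Real.norm_of_nonneg hnonneg]
    exact h t ht'
  intro t ht
  refine le_antisymm ?_ (hu0 t ht)
  simpa only [hintegral t ht, mul_zero] using h t ht

namespace IsCaputoSolution

variable {α y₀ y₁ T lam t : ℝ} {F y : ℝ → ℝ}

lemma mono {T' : ℝ} (h : IsCaputoSolution α y₀ y₁ T F y) (hT : T' ≤ T) :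
    IsCaputoSolution α y₀ y₁ T' F y where
  continuousOn := h.continuousOn.mono (Icc_subset_Icc_right hT)
  continuousOn_source := h.continuousOn_source.mono (Icc_subset_Icc_right hT)
  eq_add_riemannLiouville t ht := h.eq_add_riemannLiouville t (Icc_subset_Icc_right hT ht)

lemma riemannLiouville_eq {b : ℝ} (hα : 1 ≤ α) (h : IsCaputoSolution α y₀ y₁ T F y) (hb : 1 ≤ b)
    (ht : t ∈ Icc 0 T) :
    riemannLiouville b y t = y₀ * (t ^ b / Real.Gamma (b + 1))
      + y₁ * (t ^ (b + 1) / Real.Gamma (b + 2)) + riemannLiouville (b + α) F t := by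
  have hsub : Icc 0 t ⊆ Icc 0 T := Icc_subset_Icc_right ht.2
  have hy : ContinuousOn y (Icc 0 t) := h.continuousOn.mono hsub
  have hb0 : 0 < b := by linarith
  have hone : riemannLiouville b (fun _ => 1) t = t ^ b / Real.Gamma (b + 1) := by
    simpa [div_eq_inv_mul] using riemannLiouville_rpow hb0 le_rfl ht.1
  have hid : riemannLiouville b (fun s => s) t = t ^ (b + 1) / Real.Gamma (b + 2) := by
    have hpow := riemannLiouville_rpow hb0 zero_le_one ht.1
    simp only [Real.rpow_one, one_add_one_eq_two, Real.Gamma_two, add_assoc b] at hpow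
    rw [hpow, one_div_mul_eq_div]
  have hsource : riemannLiouville b (fun s => y s - (y₀ * 1 + y₁ * s)) t
      = riemannLiouville (b + α) F t := by
    rw [← riemannLiouville_riemannLiouville hb hα ht.1 (h.continuousOn_source.mono hsub)]
    refine riemannLiouville_congr ht.1 fun s hs => ?_
    simp only [h.eq_add_riemannLiouville s (hsub hs)]
    ring
  calc riemannLiouville b y t
      = riemannLiouville b (fun s => y₀ * 1 + y₁ * s + (y s - (y₀ * 1 + y₁ * s))) t := by
        simp only [add_sub_cancel]
    _ = y₀ * riemannLiouville b (fun _ => 1) t + y₁ * riemannLiouville b (fun s => s) t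
          + riemannLiouville b (fun s => y s - (y₀ * 1 + y₁ * s)) t := by
        rw [riemannLiouville_add hb ht.1 (by fun_prop) (by fun_prop),
          riemannLiouville_add hb ht.1 (by fun_prop) (by fun_prop),
          riemannLiouville_const_mul, riemannLiouville_const_mul]
    _ = _ := by rw [hone, hid, hsource]

lemma riemannLiouville_source_eq {b : ℝ} (h : IsCaputoSolution α y₀ y₁ T F y) (hb : 1 ≤ b)
    (ht : t ∈ Icc 0 T) (lam : ℝ) :
    riemannLiouville b F t
      = lam * riemannLiouville b y t + riemannLiouville b (fun s => F s - lam * y s) t := by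
  have hy : ContinuousOn y (Icc 0 t) := h.continuousOn.mono (Icc_subset_Icc_right ht.2)
  have hF : ContinuousOn F (Icc 0 t) := h.continuousOn_source.mono (Icc_subset_Icc_right ht.2)
  rw [← riemannLiouville_const_mul, ← riemannLiouville_add hb ht.1 (by fun_prop) (by fun_prop)]
  simp only [add_sub_cancel]

lemma eq_partialSums (hα : 1 ≤ α) (h : IsCaputoSolution α y₀ y₁ T F y) (ht : t ∈ Icc 0 T)
    (n : ℕ) :
    y t = y₀ * ∑ k ∈ Finset.range (n + 1), (lam * t ^ α) ^ k / Real.Gamma (α * k + 1)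
      + y₁ * (t * ∑ k ∈ Finset.range (n + 1), (lam * t ^ α) ^ k / Real.Gamma (α * k + 2))
      + ∑ k ∈ Finset.range (n + 1),
          lam ^ k * riemannLiouville (α * k + α) (fun s => F s - lam * y s) t
      + lam * (lam ^ n * riemannLiouville (α * n + α) y t) := by
  induction n with
  | zero =>
    rw [h.eq_add_riemannLiouville t ht, h.riemannLiouville_source_eq hα ht lam]
    simp
    ring
  | succ n ih =>
    have hb : 1 ≤ α * n + α := le_add_of_nonneg_of_le (by positivity) hα
    have hsucc : α * ((n + 1 : ℕ) : ℝ) = α * n + α := by push_cast; ring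
    have hpow : (t ^ α) ^ (n + 1) = t ^ (α * n + α) := by
      rw [← Real.rpow_natCast, ← Real.rpow_mul ht.1, hsucc]
    have hpow' : t ^ (α * n + α + 1) = t * t ^ (α * n + α) := by
      rw [Real.rpow_add_of_nonneg ht.1 (by linarith) zero_le_one, Real.rpow_one, mul_comm]
    rw [ih, h.riemannLiouville_eq hα hb ht, h.riemannLiouville_source_eq (by linarith) ht lam,
      Finset.sum_range_succ _ (n + 1), Finset.sum_range_succ _ (n + 1),
      Finset.sum_range_succ _ (n + 1), hsucc, mul_pow lam, hpow, hpow']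
    ring

theorem variation_of_constants (hα : 1 ≤ α) (h : IsCaputoSolution α y₀ y₁ T F y)
    (ht : t ∈ Icc 0 T) (lam : ℝ) :
    y t = linearCaputoSolution α y₀ y₁ lam t
      + ∫ s in (0 : ℝ)..t, mlKernel α lam (t - s) * (F s - lam * y s) := by
  have hy : ContinuousOn y (Icc 0 t) := h.continuousOn.mono (Icc_subset_Icc_right ht.2)
  have hF : ContinuousOn F (Icc 0 t) := h.continuousOn_source.mono (Icc_subset_Icc_right ht.2)
  have hinit₀ := ((hasSum_mlE hα le_rfl (lam * t ^ α)).tendsto_sum_nat).const_mul y₀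
  have hinit₁ :=
    (((hasSum_mlE hα one_le_two (lam * t ^ α)).tendsto_sum_nat).const_mul t).const_mul y₁
  have hforcing := (hasSum_pow_mul_riemannLiouville (lam := lam)
    (h := fun s => F s - lam * y s) hα ht.1 (by fun_prop)).tendsto_sum_nat
  have hremainder := (hasSum_pow_mul_riemannLiouville (lam := lam)
    hα ht.1 hy).summable.tendsto_atTop_zero.const_mul lam
  have hlimit := (((hinit₀.add hinit₁).add hforcing).comp
    (Filter.tendsto_add_atTop_nat 1)).add hremainder
  rw [mul_zero, add_zero] at hlimit
  exact tendsto_nhds_unique tendsto_const_nhds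
    (hlimit.congr fun n => (h.eq_partialSums hα ht n).symm)

lemma linearCaputoSolution_le (hα : 1 ≤ α) (h : IsCaputoSolution α y₀ y₁ T F y)
    (ht : t ∈ Icc 0 T) (hK : ∀ r ∈ Icc 0 t, 0 ≤ mlKernel α lam r)
    (hF : ∀ s ∈ Icc 0 t, lam * y s ≤ F s) :
    linearCaputoSolution α y₀ y₁ lam t ≤ y t := by
  rw [h.variation_of_constants hα ht lam, le_add_iff_nonneg_right]
  exact intervalIntegral.integral_nonneg ht.1 fun s hs =>
    mul_nonneg (hK _ ⟨sub_nonneg.2 hs.2, sub_le_self _ hs.1⟩) (sub_nonneg.2 (hF s hs))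

lemma le_linearCaputoSolution (hα : 1 ≤ α) (h : IsCaputoSolution α y₀ y₁ T F y)
    (ht : t ∈ Icc 0 T) (hK : ∀ r ∈ Icc 0 t, 0 ≤ mlKernel α lam r)
    (hF : ∀ s ∈ Icc 0 t, F s ≤ lam * y s) :
    y t ≤ linearCaputoSolution α y₀ y₁ lam t := by
  rw [h.variation_of_constants hα ht lam, add_le_iff_nonpos_right, ← neg_nonneg,
    ← intervalIntegral.integral_neg]
  refine intervalIntegral.integral_nonneg ht.1 fun s hs => ?_
  rw [← mul_neg, neg_sub]
  exact mul_nonneg (hK _ ⟨sub_nonneg.2 hs.2, sub_le_self _ hs.1⟩) (sub_nonneg.2 (hF s hs))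

lemma le_mul_integral_posPart {L M : ℝ} (hα : 1 ≤ α) (hL : 0 ≤ L)
    (h : IsCaputoSolution α y₀ y₁ T F y) (hF : ∀ s ∈ Icc 0 T, F s ≤ L * |y s|)
    (hK : ∀ r ∈ Icc 0 T, mlKernel α (-L) r ∈ Icc 0 M)
    (ht : t ∈ Icc 0 T) (hlin : linearCaputoSolution α y₀ y₁ (-L) t ≤ 0) :
    y t ≤ 2 * L * M * ∫ s in (0 : ℝ)..t, (y s)⁺ := by
  have hsub : Icc 0 t ⊆ Icc 0 T := Icc_subset_Icc_right ht.2
  have hy : ContinuousOn y (Icc 0 t) := h.continuousOn.mono hsub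
  have hF' : ContinuousOn F (Icc 0 t) := h.continuousOn_source.mono hsub
  have hpos : ContinuousOn (fun s => (y s)⁺) (Icc 0 t) := hy.sup continuousOn_const
  have hkernel : Continuous fun s => mlKernel α (-L) (t - s) :=
    (continuous_mlKernel hα).comp (continuous_const.sub continuous_id)
  have hintegrand : ∀ s ∈ Icc 0 t,
      mlKernel α (-L) (t - s) * (F s - -L * y s) ≤ 2 * L * M * (y s)⁺ := by
    intro s hs
    obtain ⟨hK0, hKM⟩ := hK (t - s) ⟨sub_nonneg.2 hs.2, (sub_le_self _ hs.1).trans ht.2⟩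
    have hsource : F s - -L * y s ≤ 2 * L * (y s)⁺ := by
      linear_combination hF s (hsub hs) - L * posPart_sub_negPart (y s)
        - L * posPart_add_negPart (y s)
    calc mlKernel α (-L) (t - s) * (F s - -L * y s)
        ≤ mlKernel α (-L) (t - s) * (2 * L * (y s)⁺) := mul_le_mul_of_nonneg_left hsource hK0
      _ ≤ M * (2 * L * (y s)⁺) :=
        mul_le_mul_of_nonneg_right hKM (mul_nonneg (by positivity) (posPart_nonneg _))
      _ = 2 * L * M * (y s)⁺ := by ring
  calc y t = linearCaputoSolution α y₀ y₁ (-L) t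
        + ∫ s in (0 : ℝ)..t, mlKernel α (-L) (t - s) * (F s - -L * y s) :=
        h.variation_of_constants hα ht (-L)
    _ ≤ ∫ s in (0 : ℝ)..t, mlKernel α (-L) (t - s) * (F s - -L * y s) :=
        add_le_of_nonpos_left hlin
    _ ≤ ∫ s in (0 : ℝ)..t, 2 * L * M * (y s)⁺ :=
        intervalIntegral.integral_mono_on ht.1
          ((hkernel.continuousOn.mul (by fun_prop)).intervalIntegrable_of_Icc ht.1)
          ((hpos.const_mul _).intervalIntegrable_of_Icc ht.1) hintegrand
    _ = 2 * L * M * ∫ s in (0 : ℝ)..t, (y s)⁺ := intervalIntegral.integral_const_mul _ _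

theorem nonpos {L : ℝ} (hα : 1 ≤ α) (hL : 0 ≤ L) (h : IsCaputoSolution α y₀ y₁ T F y)
    (hF : ∀ s ∈ Icc 0 T, F s ≤ L * |y s|) (hK : ∀ r ∈ Icc 0 T, 0 ≤ mlKernel α (-L) r)
    (hlin : ∀ t ∈ Icc 0 T, linearCaputoSolution α y₀ y₁ (-L) t ≤ 0) :
    ∀ t ∈ Icc 0 T, y t ≤ 0 := by
  obtain ⟨M, hM⟩ := (isCompact_Icc (a := (0 : ℝ)) (b := T)).exists_bound_of_continuousOn
    (continuous_mlKernel (lam := -L) hα).continuousOn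
  have hbound : ∀ t ∈ Icc 0 T, (y t)⁺ ≤ 2 * L * M * ∫ s in (0 : ℝ)..t, (y s)⁺ := by
    intro t ht
    have hM0 : 0 ≤ M := (norm_nonneg _).trans (hM t ht)
    refine sup_le ?_ (mul_nonneg (by positivity)
      (intervalIntegral.integral_nonneg ht.1 fun _ _ => posPart_nonneg _))
    exact h.le_mul_integral_posPart hα hL hF
      (fun r hr => ⟨hK r hr, (le_abs_self _).trans (hM r hr)⟩) ht (hlin t ht)
  intro t ht
  exact posPart_eq_zero.1 (eq_zero_of_le_mul_integral (h.continuousOn.sup continuousOn_const)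
    (fun _ _ => posPart_nonneg _) hbound t ht)

end IsCaputoSolution

/-- The set of slopes `f(τ, x) / x` with `τ ∈ [0, t]` and `x ≠ 0`, whose infimum and supremum are
`a₋(t)` and `a*(t)`. -/
def originSlopes (f : ℝ → ℝ → ℝ) (t : ℝ) : Set ℝ :=
  {r : ℝ | ∃ τ ∈ Icc (0 : ℝ) t, ∃ x : ℝ, x ≠ 0 ∧ r = f τ x / x}

section OriginSlopes

variable {f : ℝ → ℝ → ℝ} {L t : ℝ}

lemma originSlopes_nonempty (ht : 0 ≤ t) : (originSlopes f t).Nonempty :=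
  ⟨f 0 1 / 1, 0, ⟨le_rfl, ht⟩, 1, one_ne_zero, rfl⟩

lemma originSlopes_subset_Icc (hf : ∀ τ ∈ Icc 0 t, ∀ x, |f τ x| ≤ L * |x|) :
    originSlopes f t ⊆ Icc (-L) L := by
  rintro _ ⟨τ, hτ, x, hx, rfl⟩
  rw [mem_Icc, ← abs_le, abs_div, div_le_iff₀ (abs_pos.2 hx)]
  exact hf τ hτ x

lemma neg_le_sInf_originSlopes (ht : 0 ≤ t) (hf : ∀ τ ∈ Icc 0 t, ∀ x, |f τ x| ≤ L * |x|) :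
    -L ≤ sInf (originSlopes f t) :=
  le_csInf (originSlopes_nonempty ht) fun _ hr => (originSlopes_subset_Icc hf hr).1

lemma neg_le_sSup_originSlopes (ht : 0 ≤ t) (hf : ∀ τ ∈ Icc 0 t, ∀ x, |f τ x| ≤ L * |x|) :
    -L ≤ sSup (originSlopes f t) :=
  (neg_le_sInf_originSlopes ht hf).trans <| csInf_le_csSup (originSlopes_nonempty ht)
    (bddBelow_Icc.mono (originSlopes_subset_Icc hf))
    (bddAbove_Icc.mono (originSlopes_subset_Icc hf))

lemma le_sInf_originSlopes_mul (hf : ∀ τ ∈ Icc 0 t, ∀ x, |f τ x| ≤ L * |x|) {s x : ℝ}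
    (hs : s ∈ Icc 0 t) (hx : x ≤ 0) : f s x ≤ sInf (originSlopes f t) * x := by
  rcases hx.lt_or_eq with hx | rfl
  · exact (le_div_iff_of_neg hx).1 <| csInf_le
      (bddBelow_Icc.mono (originSlopes_subset_Icc hf)) ⟨s, hs, x, hx.ne, rfl⟩
  · simpa using (abs_le.1 (hf s hs 0)).2

lemma sSup_originSlopes_mul_le (hf : ∀ τ ∈ Icc 0 t, ∀ x, |f τ x| ≤ L * |x|) {s x : ℝ}
    (hs : s ∈ Icc 0 t) (hx : x ≤ 0) : sSup (originSlopes f t) * x ≤ f s x := by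
  rcases hx.lt_or_eq with hx | rfl
  · exact (div_le_iff_of_neg hx).1 <| le_csSup
      (bddAbove_Icc.mono (originSlopes_subset_Icc hf)) ⟨s, hs, x, hx.ne, rfl⟩
  · simpa using (abs_le.1 (hf s hs 0)).1

end OriginSlopes

theorem nonlinear_bounds_nonpos_data_general {α L T y₀ y₁ : ℝ} {f : ℝ → ℝ → ℝ} {y : ℝ → ℝ}
    (hα : 1 ≤ α) (hf : ∀ t ∈ Icc 0 T, ∀ x, |f t x| ≤ L * |x|)
    (hy : IsCaputoSolution α y₀ y₁ T (fun s => f s (y s)) y)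
    (hE : ∀ t ∈ Icc 0 T, 0 ≤ mlE α α (-L * t ^ α))
    (hlin : ∀ t ∈ Icc 0 T, linearCaputoSolution α y₀ y₁ (-L) t ≤ 0) :
    ∀ t ∈ Icc 0 T, linearCaputoSolution α y₀ y₁ (sSup (originSlopes f t)) t ≤ y t ∧
      y t ≤ linearCaputoSolution α y₀ y₁ (sInf (originSlopes f t)) t := by
  intro t ht
  have hsub : Icc 0 t ⊆ Icc 0 T := Icc_subset_Icc_right ht.2
  have hft : ∀ s ∈ Icc 0 t, ∀ x, |f s x| ≤ L * |x| := fun s hs => hf s (hsub hs)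
  have hα0 : 0 < α := zero_lt_one.trans_le hα
  have hL : 0 ≤ L := by simpa using (abs_nonneg _).trans (hf t ht 1)
  have hK {lam : ℝ} (hlam : -L ≤ lam) : ∀ r ∈ Icc 0 T, 0 ≤ mlKernel α lam r := fun r hr =>
    mul_nonneg (Real.rpow_nonneg hr.1 _) (mlE_mul_rpow_nonneg_of_neg_le hα0 hα0 hE hlam r hr)
  have hnonpos : ∀ s ∈ Icc 0 T, y s ≤ 0 :=
    hy.nonpos hα hL (fun s hs => (le_abs_self _).trans (hf s hs _)) (hK le_rfl) hlin
  exact ⟨hy.linearCaputoSolution_le hα ht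
      (fun r hr => hK (neg_le_sSup_originSlopes ht.1 hft) r (hsub hr))
      fun s hs => sSup_originSlopes_mul_le hft hs (hnonpos s (hsub hs)),
    hy.le_linearCaputoSolution hα ht
      (fun r hr => hK (neg_le_sInf_originSlopes ht.1 hft) r (hsub hr))
      fun s hs => le_sInf_originSlopes_mul hft hs (hnonpos s (hsub hs))⟩

/-- Nonlinear separation bounds for nonpositive initial data, under the
assumption `f(t,0) = 0` (Theorem 2.11(b) of the paper). -/
theorem nonlinear_bounds_nonpos_data
    (α T Tstar L y₀ y₁ : ℝ) (hα₁ : 1 < α) (hα₂ : α < 2) (hT : 0 < T) (hL : 0 < L)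
    (f : ℝ → ℝ → ℝ)
    (hf_cont : ContinuousOn (fun p : ℝ × ℝ => f p.1 p.2) (Set.Icc 0 T ×ˢ Set.univ))
    (hf_lip : ∀ t ∈ Set.Icc (0 : ℝ) T, ∀ x z : ℝ, |f t x - f t z| ≤ L * |x - z|)
    (hf0 : ∀ t ∈ Set.Icc (0 : ℝ) T, f t 0 = 0)
    (alow astar : ℝ → ℝ)
    (halow : ∀ t ∈ Set.Icc (0 : ℝ) T,
      alow t = sInf {r : ℝ | ∃ τ ∈ Set.Icc (0 : ℝ) t, ∃ x : ℝ, x ≠ 0 ∧ r = f τ x / x})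
    (hastar : ∀ t ∈ Set.Icc (0 : ℝ) T,
      astar t = sSup {r : ℝ | ∃ τ ∈ Set.Icc (0 : ℝ) t, ∃ x : ℝ, x ≠ 0 ∧ r = f τ x / x})
    (y : ℝ → ℝ) (hy_cont : ContinuousOn y (Set.Icc 0 T))
    (hy : ∀ t ∈ Set.Icc (0 : ℝ) T,
      y t = y₀ + y₁ * t
        + (1 / Real.Gamma α) * ∫ s in (0 : ℝ)..t, (t - s) ^ (α - 1) * f s (y s))
    (hy₀ : y₀ ≤ 0) (hy₁ : y₁ ≤ 0)
    (hTstar : 0 < Tstar) (hTstarT : Tstar ≤ T)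
    (hcond : ∀ t ∈ Set.Icc (0 : ℝ) Tstar,
      mlE α α (-(L * t ^ α)) > 0 ∧ mlE α 2 (-(L * t ^ α)) > 0 ∧
        (mlE α 1 (-(L * t ^ α)) > 0 ∨ y₀ = 0)) :
    ∀ t ∈ Set.Icc (0 : ℝ) Tstar,
      y₀ * mlE α 1 (astar t * t ^ α) + y₁ * (t * mlE α 2 (astar t * t ^ α)) ≤ y t ∧
        y t ≤ y₀ * mlE α 1 (alow t * t ^ α) + y₁ * (t * mlE α 2 (alow t * t ^ α)) := by
  intro t ht
  have htT : t ∈ Icc 0 T := ⟨ht.1, ht.2.trans hTstarT⟩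
  have hgrowth : ∀ s ∈ Icc 0 T, ∀ x, |f s x| ≤ L * |x| := fun s hs x => by
    simpa only [hf0 s hs, sub_zero] using hf_lip s hs x 0
  have hsol : IsCaputoSolution α y₀ y₁ T (fun s => f s (y s)) y :=
    ⟨hy_cont, hf_cont.comp (continuousOn_id.prodMk hy_cont) fun s hs => ⟨hs, mem_univ _⟩, hy⟩
  simp only [← neg_mul] at hcond
  rw [halow t htT, hastar t htT]
  exact nonlinear_bounds_nonpos_data_general hα₁.le
    (fun s hs => hgrowth s (Icc_subset_Icc_right hTstarT hs)) (hsol.mono hTstarT)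
    (fun s hs => (hcond s hs).1.le)
    (fun s hs => linearCaputoSolution_nonpos hs.1 hy₀ hy₁
      ((hcond s hs).2.2.imp_left le_of_lt) (hcond s hs).2.1.le) t ht
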